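/- Let Ω ⊂ X be an open set and let u ∈ L^1_loc(Ω) with ‖Du‖(Ω) < ∞. Then there exists a sequence (w_i) of locally Lipschitz functions on Ω with w_i − u → 0 in L^1(Ω) and ∫_Ω g_{w_i} dμ → ‖Du‖(Ω), where g_{w_i} is the minimal 1-weak upper gradient of w_i in Ω. -/

import Mathlib

open MeasureTheory Filter Metric Set
open scoped Topology ENNReal NNReal symmDiff

noncomputable section

namespace PaperBV

/-- A rectifiable curve parametrized by arc-length: a `1`-Lipschitz map on `[0, len]`. -/
structure Curve (X : Type*) [MetricSpace X] where
  len : ℝ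
  len_nonneg : 0 ≤ len
  toFun : ℝ → X
  lip : LipschitzOnWith 1 toFun (Set.Icc 0 len)

variable {X : Type*} [MetricSpace X] [MeasurableSpace X] [BorelSpace X]

/-- The curve lies in the set `A`. -/
def Curve.In (γ : Curve X) (A : Set X) : Prop :=
  ∀ t ∈ Set.Icc (0 : ℝ) γ.len, γ.toFun t ∈ A

/-- The curve integral `∫_γ g ds` of a nonnegative function, for an
arc-length parametrized curve. -/
def Curve.integral (γ : Curve X) (g : X → ℝ≥0∞) : ℝ≥0∞ :=
  ∫⁻ t in Set.Icc (0 : ℝ) γ.len, g (γ.toFun t)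

/-- The upper gradient inequality `|u(x) - u(y)| ≤ ∫_γ g ds` along the curve `γ`,
where `x, y` are the endpoints of `γ`. -/
def UGIneq (u : X → ℝ) (g : X → ℝ≥0∞) (γ : Curve X) : Prop :=
  ENNReal.ofReal |u (γ.toFun 0) - u (γ.toFun γ.len)| ≤ γ.integral g

/-- `g` is an upper gradient of `u` on `X`: `g` is nonnegative (automatic in `ℝ≥0∞`),
Borel, and the upper gradient inequality holds along every curve. -/
def IsUpperGradient (u : X → ℝ) (g : X → ℝ≥0∞) : Prop :=
  Measurable g ∧ ∀ γ : Curve X, UGIneq u g γ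

/-- A family of curves has zero `1`-modulus: there is a nonnegative Borel function
`ρ ∈ L¹(X)` whose curve integral is infinite along every curve of the family. -/
def ZeroMod (μ : Measure X) (Γ : Set (Curve X)) : Prop :=
  ∃ ρ : X → ℝ≥0∞, Measurable ρ ∧ (∫⁻ x, ρ x ∂μ) < ∞ ∧ ∀ γ ∈ Γ, γ.integral ρ = ∞

/-- `g` is a `1`-weak upper gradient of `u` in `A`: `g` is nonnegative, `μ`-measurable,
and the upper gradient inequality holds along `1`-a.e. curve in `A`. -/
def IsWeakUpperGradientOn (μ : Measure X) (u : X → ℝ) (g : X → ℝ≥0∞) (A : Set X) : Prop :=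
  AEMeasurable g μ ∧ ZeroMod μ {γ : Curve X | γ.In A ∧ ¬ UGIneq u g γ}

/-- A nonnegative function `g` belongs to `L¹_loc(A)`. -/
def LIntegrableLocOn (μ : Measure X) (g : X → ℝ≥0∞) (A : Set X) : Prop :=
  ∀ x ∈ A, ∃ r > (0 : ℝ), (∫⁻ y in A ∩ Metric.ball x r, g y ∂μ) < ∞

/-- `g` is the minimal `1`-weak upper gradient of `u` in `A`: a `1`-weak upper gradient
satisfying `g ≤ g'` `μ`-a.e. in `A` for every `1`-weak upper gradient `g' ∈ L¹_loc(A)`. -/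
def IsMinimalWUG (μ : Measure X) (u : X → ℝ) (g : X → ℝ≥0∞) (A : Set X) : Prop :=
  IsWeakUpperGradientOn μ u g A ∧
    ∀ g' : X → ℝ≥0∞, IsWeakUpperGradientOn μ u g' A → LIntegrableLocOn μ g' A →
      ∀ᵐ x ∂(μ.restrict A), g x ≤ g' x

/-- The Newtonian norm `‖u‖_{N^{1,1}(A)}` (valued in `ℝ≥0∞`). -/
def NNorm (μ : Measure X) (A : Set X) (u : X → ℝ) : ℝ≥0∞ :=
  (∫⁻ x in A, ENNReal.ofReal |u x| ∂μ) +
    ⨅ (g : X → ℝ≥0∞) (_ : IsWeakUpperGradientOn μ u g A), ∫⁻ x in A, g x ∂μ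

/-- `u ∈ N^{1,1}(A)`. -/
def MemN11 (μ : Measure X) (A : Set X) (u : X → ℝ) : Prop :=
  NNorm μ A u < ∞

/-- `u ∈ N^{1,1}_loc(A)`: every point of `A` has a ball `B` with `u ∈ N^{1,1}(A ∩ B)`. -/
def MemN11Loc (μ : Measure X) (A : Set X) (u : X → ℝ) : Prop :=
  ∀ x ∈ A, ∃ r > (0 : ℝ), NNorm μ (A ∩ Metric.ball x r) u < ∞

/-- `u ∈ N^{1,1}(Ω')` for every bounded open `Ω' ⊆ X`. -/
def MemN11LocBounded (μ : Measure X) (u : X → ℝ) : Prop :=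
  ∀ Ω' : Set X, IsOpen Ω' → Bornology.IsBounded Ω' → NNorm μ Ω' u < ∞

/-- `u ∈ N^{1,1}_0(Ω)`: `u ∈ N^{1,1}(X)` and `u = 0` outside `Ω`. -/
def MemN110 (μ : Measure X) (Ω : Set X) (u : X → ℝ) : Prop :=
  MemN11 μ Set.univ u ∧ ∀ x ∉ Ω, u x = 0

/-- The `1`-capacity `capa₁(A) = inf {‖u‖_{N^{1,1}(X)} : u ∈ N^{1,1}(X), u ≥ 1 on A}`. -/
def capa1 (μ : Measure X) (A : Set X) : ℝ≥0∞ :=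
  ⨅ (u : X → ℝ) (_ : MemN11 μ Set.univ u) (_ : ∀ x ∈ A, 1 ≤ u x), NNorm μ Set.univ u

/-- `U` is `1`-quasiopen: for every `ε > 0` there is an open `G` with `capa₁(G) < ε`
such that `U ∪ G` is open. -/
def QuasiOpen (μ : Measure X) (U : Set X) : Prop :=
  ∀ ε : ℝ, 0 < ε → ∃ G : Set X, IsOpen G ∧ capa1 μ G < ENNReal.ofReal ε ∧ IsOpen (U ∪ G)

/-- `u ∈ L¹_loc(A)`. -/
def MemL1Loc (μ : Measure X) (A : Set X) (u : X → ℝ) : Prop :=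
  AEMeasurable u (μ.restrict A) ∧
    ∀ x ∈ A, ∃ r > (0 : ℝ), (∫⁻ y in A ∩ Metric.ball x r, ENNReal.ofReal |u y| ∂μ) < ∞

/-- `v i → u` in `L¹_loc(A)`: every `x ∈ A` has a ball `B` with `v i → u` in `L¹(A ∩ B)`. -/
def L1LocConv (μ : Measure X) (A : Set X) (v : ℕ → X → ℝ) (u : X → ℝ) : Prop :=
  ∀ x ∈ A, ∃ r > (0 : ℝ),
    Filter.Tendsto (fun i => ∫⁻ y in A ∩ Metric.ball x r, ENNReal.ofReal |v i y - u y| ∂μ)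
      Filter.atTop (𝓝 0)

/-- `u` is locally Lipschitz on `Ω`. -/
def LocLipOn (u : X → ℝ) (Ω : Set X) : Prop :=
  ∀ x ∈ Ω, ∃ r > (0 : ℝ), ∃ K : ℝ≥0, LipschitzOnWith K u (Ω ∩ Metric.ball x r)

/-- The total variation `‖Du‖(Ω)` of `u` in an open set `Ω`: the infimum of
`liminf_i ∫_Ω g_{v i} dμ` over sequences of locally Lipschitz functions `v i → u`
in `L¹_loc(Ω)`, where `g_{v i}` is the minimal `1`-weak upper gradient of `v i` in `Ω`. -/
def tvOpen (μ : Measure X) (Ω : Set X) (u : X → ℝ) : ℝ≥0∞ :=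
  ⨅ (v : ℕ → X → ℝ) (g : ℕ → X → ℝ≥0∞) (_ : ∀ i, LocLipOn (v i) Ω)
    (_ : ∀ i, IsMinimalWUG μ (v i) (g i) Ω) (_ : L1LocConv μ Ω v u),
    Filter.liminf (fun i => ∫⁻ x in Ω, g i x ∂μ) Filter.atTop

/-- The total variation `‖Du‖(A)` of `u` in an arbitrary set `A`:
`inf {‖Du‖(Ω) : Ω ⊇ A open}`. -/
def tv (μ : Measure X) (A : Set X) (u : X → ℝ) : ℝ≥0∞ :=
  ⨅ (Ω : Set X) (_ : IsOpen Ω) (_ : A ⊆ Ω), tvOpen μ Ω u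

/-- The perimeter `P(E, A) = ‖Dχ_E‖(A)` for arbitrary `A`. -/
def perim (μ : Measure X) (E A : Set X) : ℝ≥0∞ :=
  tv μ A (Set.indicator E (fun _ => (1 : ℝ)))

/-- The perimeter `P(E, Ω) = ‖Dχ_E‖(Ω)` for open `Ω`. -/
def perimOpen (μ : Measure X) (E Ω : Set X) : ℝ≥0∞ :=
  tvOpen μ Ω (Set.indicator E (fun _ => (1 : ℝ)))

/-- The measure `μ` is doubling with constant `Cd`. -/
def Doubling (μ : Measure X) (Cd : ℝ) : Prop :=
  1 ≤ Cd ∧ ∀ (x : X) (r : ℝ), 0 < r →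
    0 < μ (Metric.ball x (2 * r)) ∧
      μ (Metric.ball x (2 * r)) ≤ ENNReal.ofReal Cd * μ (Metric.ball x r) ∧
      μ (Metric.ball x r) < ∞

/-- The space supports a `(1,1)`-Poincaré inequality with constants `CP, lam`. -/
def Poincare (μ : Measure X) (CP lam : ℝ) : Prop :=
  1 ≤ CP ∧ 1 ≤ lam ∧ ∀ (x : X) (r : ℝ), 0 < r → ∀ (u : X → ℝ) (g : X → ℝ≥0∞),
    MemL1Loc μ Set.univ u → IsUpperGradient u g →
      ENNReal.ofReal (⨍ y in Metric.ball x r, |u y - ⨍ z in Metric.ball x r, u z ∂μ| ∂μ)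
        ≤ ENNReal.ofReal (CP * r) *
            ((∫⁻ y in Metric.ball x (lam * r), g y ∂μ) / μ (Metric.ball x (lam * r)))

/-- The restricted spherical Hausdorff content of codimension one. -/
def HR (μ : Measure X) (R : ℝ) (A : Set X) : ℝ≥0∞ :=
  ⨅ (c : ℕ → X) (r : ℕ → ℝ) (_ : ∀ i, 0 < r i ∧ r i ≤ R)
    (_ : A ⊆ ⋃ i, Metric.ball (c i) (r i)),
    ∑' i, μ (Metric.ball (c i) (r i)) / ENNReal.ofReal (r i)

/-- The codimension-one Hausdorff measure `H(A) = lim_{R → 0} H_R(A)`. -/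
def Hcodim (μ : Measure X) (A : Set X) : ℝ≥0∞ :=
  ⨆ (R : ℝ) (_ : 0 < R), HR μ R A

/-- The lower approximate limit `u^∧`. -/
def lowerApprox (μ : Measure X) (u : X → ℝ) (x : X) : EReal :=
  sSup ((fun t : ℝ => (t : EReal)) ''
    {t : ℝ | Filter.Tendsto
      (fun r => μ (Metric.ball x r ∩ {y | u y < t}) / μ (Metric.ball x r))
      (𝓝[>] (0 : ℝ)) (𝓝 0)})

/-- The upper approximate limit `u^∨`. -/
def upperApprox (μ : Measure X) (u : X → ℝ) (x : X) : EReal :=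
  sInf ((fun t : ℝ => (t : EReal)) ''
    {t : ℝ | Filter.Tendsto
      (fun r => μ (Metric.ball x r ∩ {y | t < u y}) / μ (Metric.ball x r))
      (𝓝[>] (0 : ℝ)) (𝓝 0)})

/-- `u ∈ BV_loc(X)`: `u ∈ L¹_loc(X)` with `‖Du‖(Ω') < ∞` for every bounded open `Ω'`. -/
def MemBVLoc (μ : Measure X) (u : X → ℝ) : Prop :=
  MemL1Loc μ Set.univ u ∧
    ∀ Ω' : Set X, IsOpen Ω' → Bornology.IsBounded Ω' → tvOpen μ Ω' u < ∞

/-- The measure-theoretic interior `I_E`. -/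
def mInterior (μ : Measure X) (E : Set X) : Set X :=
  {x | Filter.Tendsto (fun r => μ (Metric.ball x r \ E) / μ (Metric.ball x r))
    (𝓝[>] (0 : ℝ)) (𝓝 0)}

/-- The measure-theoretic exterior `O_E`. -/
def mExterior (μ : Measure X) (E : Set X) : Set X :=
  {x | Filter.Tendsto (fun r => μ (Metric.ball x r ∩ E) / μ (Metric.ball x r))
    (𝓝[>] (0 : ℝ)) (𝓝 0)}

/-- The measure-theoretic boundary `∂*E`: the points where both `E` and its complement
have positive upper density. -/
def mBoundary (μ : Measure X) (E : Set X) : Set X :=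
  {x | 0 < Filter.limsup (fun r => μ (Metric.ball x r ∩ E) / μ (Metric.ball x r))
        (𝓝[>] (0 : ℝ)) ∧
       0 < Filter.limsup (fun r => μ (Metric.ball x r \ E) / μ (Metric.ball x r))
        (𝓝[>] (0 : ℝ))}

/-!
Let `T > ‖Du‖(Ω)` and let `v k → u` in `L¹_loc(Ω)` be locally Lipschitz with `∫_Ω g_{v k} < T`.
Cover `Ω` by countably many balls on which the convergence is in `L¹`, take a Lipschitz partition
of unity `φ i` subordinate to them, and glue `w = ∑ φ i * v (k i)`. As `∑ φ i = 1`, the terms of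
the Leibniz rule that carry derivatives of `φ i` only see the differences `v (k i) - u`, so `g_w`
is at most `∑ φ i * g_{v (k i)}` plus an error controlled by the `L¹` distances from `v (k i)`
to `u`. Along a subsequence of `k` the integrals `∫ φ i * g_{v k}` converge for every `i`, and the
limits sum to at most `T`; hence choosing each `k i` large enough makes `‖w - u‖_{L¹(Ω)}` small and
`∫_Ω g_w` at most `T` up to a small error. The opposite inequality is the definition of `‖Du‖(Ω)`.

For a locally Lipschitz function, locally integrable weak upper gradients are bounds for its
derivative along almost every curve. Such bounds are closed under countable infima, which yields
the minimal weak upper gradient.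
-/

section RealLine

theorem abs_deriv_le_of_eventually_abs_sub_le {U Φ : ℝ → ℝ} {t c : ℝ} (hΦ : HasDerivAt Φ c t)
    (hU : ∀ᶠ s in 𝓝[>] t, |U s - U t| ≤ Φ s - Φ t) (hc : 0 ≤ c) : |deriv U t| ≤ c := by
  by_cases hd : DifferentiableAt ℝ U t
  · have hright : 𝓝[>] t ≤ 𝓝[≠] t := nhdsWithin_mono t fun s hs => ne_of_gt hs
    have hslopeU := (hasDerivAt_iff_tendsto_slope.1 hd.hasDerivAt).mono_left hright
    have hslopeΦ := (hasDerivAt_iff_tendsto_slope.1 hΦ).mono_left hright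
    refine le_of_tendsto_of_tendsto hslopeU.abs hslopeΦ ?_
    filter_upwards [hU, self_mem_nhdsWithin] with s hs hts
    have hpos : 0 < s - t := sub_pos.2 hts
    rw [slope_def_field, slope_def_field, abs_div, abs_of_pos hpos]
    gcongr
  · rwa [deriv_zero_of_not_differentiableAt hd, abs_zero]

theorem abs_le_toReal_sub_of_enorm_le_lintegral {f : ℝ → ℝ≥0∞} {a b s t y : ℝ}
    (hf : AEMeasurable f (volume.restrict (Icc a b))) (hfin : ∫⁻ r in Icc a b, f r ≠ ∞)
    (has : a ≤ s) (hst : s ≤ t) (htb : t ≤ b) (hy : ‖y‖ₑ ≤ ∫⁻ r in Icc s t, f r) :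
    |y| ≤ (∫ r in a..t, (f r).toReal) - ∫ r in a..s, (f r).toReal := by
  have hsub : Icc s t ⊆ Icc a b := Icc_subset_Icc has htb
  have hint : IntegrableOn (fun r => (f r).toReal) (Icc a b) :=
    integrable_toReal_of_lintegral_ne_top hf hfin
  have hII : ∀ c ∈ Icc a b, IntervalIntegrable (fun r => (f r).toReal) volume a c := fun c hc =>
    (intervalIntegrable_iff_integrableOn_Icc_of_le hc.1).2
      (hint.mono_set (Icc_subset_Icc_right hc.2))
  have hfin' : ∫⁻ r in Icc s t, f r ≠ ∞ := ne_top_of_le_ne_top hfin (lintegral_mono_set hsub)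
  have hf' := hf.mono_set hsub
  rw [intervalIntegral.integral_interval_sub_left (hII t ⟨has.trans hst, htb⟩)
    (hII s ⟨has, hst.trans htb⟩), intervalIntegral.integral_of_le hst,
    ← integral_Icc_eq_integral_Ioc, integral_toReal hf' (ae_lt_top' hf' hfin'),
    ← Real.norm_eq_abs, ← toReal_enorm]
  exact ENNReal.toReal_mono hfin' hy

theorem ae_enorm_deriv_le_of_enorm_sub_le_lintegral {U : ℝ → ℝ} {f : ℝ → ℝ≥0∞} {a b : ℝ}
    (hf : AEMeasurable f (volume.restrict (Icc a b))) (hfin : ∫⁻ t in Icc a b, f t ≠ ∞)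
    (hU : ∀ s t, a ≤ s → s ≤ t → t ≤ b → ‖U t - U s‖ₑ ≤ ∫⁻ r in Icc s t, f r) :
    ∀ᵐ t ∂volume.restrict (Icc a b), ‖deriv U t‖ₑ ≤ f t := by
  rcases lt_or_ge b a with hba | hab
  · simp [Icc_eq_empty_of_lt hba]
  have hint : IntervalIntegrable (fun r => (f r).toReal) volume a b :=
    (intervalIntegrable_iff_integrableOn_Icc_of_le hab).2
      (integrable_toReal_of_lintegral_ne_top hf hfin)
  have hlt : ∀ᵐ t ∂volume.restrict (Icc a b), f t < ∞ := ae_lt_top' hf hfin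
  have hIoo : ∀ᵐ t ∂volume.restrict (Icc a b), t ∈ Ioo a b := by
    rw [← restrict_Ioo_eq_restrict_Icc]
    exact ae_restrict_mem measurableSet_Ioo
  filter_upwards [ae_restrict_of_ae hint.ae_hasDerivAt_integral, hlt, hIoo] with t hderiv htop ht
  rw [Real.enorm_eq_ofReal_abs, ← ENNReal.ofReal_toReal htop.ne]
  refine ENNReal.ofReal_le_ofReal (abs_deriv_le_of_eventually_abs_sub_le
    (hderiv (Icc_subset_uIcc (Ioo_subset_Icc_self ht)) a left_mem_uIcc) ?_ ENNReal.toReal_nonneg)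
  filter_upwards [Ioo_mem_nhdsGT ht.2] with s hs
  exact abs_le_toReal_sub_of_enorm_le_lintegral hf hfin ht.1.le hs.1.le hs.2.le
    (hU t s ht.1.le hs.1.le hs.2.le)

-- Since `∑ φ i` is constant, its derivative vanishes, and any `c` may be subtracted from `v i t`.
theorem hasDerivAt_sum_mul_of_eventually_sum_eq_one {ι : Type*} {s : Finset ι} {φ v : ι → ℝ → ℝ}
    {φ' v' : ι → ℝ} {t : ℝ} (hφ : ∀ i ∈ s, HasDerivAt (φ i) (φ' i) t)
    (hv : ∀ i ∈ s, HasDerivAt (v i) (v' i) t) (hone : ∀ᶠ r in 𝓝 t, ∑ i ∈ s, φ i r = 1) (c : ℝ) :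
    HasDerivAt (fun r => ∑ i ∈ s, φ i r * v i r)
      (∑ i ∈ s, (φ i t * v' i + φ' i * (v i t - c))) t := by
  have hzero : ∑ i ∈ s, φ' i = 0 :=
    (HasDerivAt.fun_sum hφ).unique ((hasDerivAt_const t 1).congr_of_eventuallyEq hone)
  refine (HasDerivAt.fun_sum fun i hi => (hφ i hi).mul (hv i hi)).congr_deriv ?_
  have hsplit : ∀ i, φ i t * v' i + φ' i * (v i t - c) =
      φ' i * v i t + φ i t * v' i - φ' i * c := fun i => by ring
  rw [Finset.sum_congr rfl fun i _ => hsplit i, Finset.sum_sub_distrib, ← Finset.sum_mul, hzero,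
    zero_mul, sub_zero]

end RealLine

section Selection

theorem exists_selection_tsum_le_add {I D : ℕ → ℕ → ℝ≥0∞} {T : ℝ≥0∞}
    (hI : ∀ k, ∑' i, I i k ≤ T) (hT : T ≠ ∞) (hD : ∀ i, Tendsto (D i) atTop (𝓝 0))
    {e : ℕ → ℝ≥0∞} (he : ∀ i, e i ≠ 0) :
    ∃ k : ℕ → ℕ, ∑' i, I i (k i) ≤ T + ∑' i, e i ∧ ∀ i, D i (k i) ≤ e i := by
  obtain ⟨J, σ, hσ, hlim⟩ := CompactSpace.tendsto_subseq fun k i => I i k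
  have hlim_i : ∀ i, Tendsto (fun n => I i (σ n)) atTop (𝓝 (J i)) := tendsto_pi_nhds.1 hlim
  have hJ : ∑' i, J i ≤ T := ENNReal.summable.tsum_le_of_sum_le fun s =>
    le_of_tendsto' (tendsto_finsetSum s fun i _ => hlim_i i) fun n =>
      (ENNReal.sum_le_tsum s).trans (hI (σ n))
  have hgood : ∀ i, ∃ k, I i k ≤ J i + e i ∧ D i k ≤ e i := fun i => by
    have hJi : J i ≠ ∞ := ne_top_of_le_ne_top hT ((ENNReal.le_tsum i).trans hJ)
    obtain ⟨n, hIn, hDn⟩ := (((hlim_i i).eventually_lt_const (ENNReal.lt_add_right hJi (he i))).and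
      (((hD i).comp hσ.tendsto_atTop).eventually_lt_const (pos_iff_ne_zero.2 (he i)))).exists
    exact ⟨σ n, hIn.le, hDn.le⟩
  choose k hIk hDk using hgood
  refine ⟨k, ?_, hDk⟩
  calc ∑' i, I i (k i) ≤ ∑' i, (J i + e i) := ENNReal.tsum_le_tsum hIk
    _ = ∑' i, J i + ∑' i, e i := ENNReal.tsum_add
    _ ≤ T + ∑' i, e i := by gcongr

end Selection

section EssentialInfimum

variable {α : Type*} [MeasurableSpace α]

theorem ae_le_of_lintegral_inv_one_add_le {ν : Measure α} [IsFiniteMeasure ν] {f g : α → ℝ≥0∞}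
    (hf : AEMeasurable f ν) (hfg : f ≤ g)
    (hle : ∫⁻ x, (1 + f x)⁻¹ ∂ν ≤ ∫⁻ x, (1 + g x)⁻¹ ∂ν) : g ≤ᵐ[ν] f := by
  have hbound : ∀ h : α → ℝ≥0∞, ∫⁻ x, (1 + h x)⁻¹ ∂ν ≠ ∞ := fun h =>
    ne_top_of_le_ne_top (measure_ne_top ν univ) <| by
      calc ∫⁻ x, (1 + h x)⁻¹ ∂ν ≤ ∫⁻ _, 1 ∂ν :=
            lintegral_mono fun x => ENNReal.inv_le_one.2 le_self_add
        _ = ν univ := lintegral_one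
  have heq : (fun x => (1 + g x)⁻¹) =ᵐ[ν] fun x => (1 + f x)⁻¹ :=
    ae_eq_of_ae_le_of_lintegral_le
      (ae_of_all _ fun x => ENNReal.inv_le_inv.2 (add_le_add_right (hfg x) 1))
      (hbound g) (hf.const_add 1).inv hle
  filter_upwards [heq] with x hx
  exact ((ENNReal.add_right_inj ENNReal.one_ne_top).1 (inv_injective hx)).le

-- The functional `f ↦ ∫ (1 + f)⁻¹` is finite and strictly decreasing, so a maximizer is minimal.
theorem exists_forall_ae_le_of_iInf_mem (ν : Measure α) [SFinite ν] {S : Set (α → ℝ≥0∞)}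
    (hne : S.Nonempty) (hmeas : ∀ f ∈ S, AEMeasurable f ν)
    (hinf : ∀ f : ℕ → α → ℝ≥0∞, (∀ n, f n ∈ S) → ⨅ n, f n ∈ S) :
    ∃ g ∈ S, ∀ f ∈ S, g ≤ᵐ[ν] f := by
  set J : (α → ℝ≥0∞) → ℝ≥0∞ := fun f => ∫⁻ x, (1 + f x)⁻¹ ∂ν.toFinite
  have hJmono : ∀ {f g : α → ℝ≥0∞}, f ≤ g → J g ≤ J f := fun hfg =>
    lintegral_mono fun x => ENNReal.inv_le_inv.2 (add_le_add_right (hfg x) 1)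
  obtain ⟨a, -, ha, haS⟩ := exists_seq_tendsto_sSup (hne.image J) (OrderTop.bddAbove _)
  choose f hfS hfa using haS
  have hmax : ∀ h ∈ S, J h ≤ J (⨅ n, f n) := fun h hh =>
    (le_sSup (mem_image_of_mem J hh)).trans <| le_of_tendsto' ha fun n =>
      hfa n ▸ hJmono (iInf_le f n)
  refine ⟨⨅ n, f n, hinf f hfS, fun h hh => ?_⟩
  have hgh : ⨅ n, (Nat.casesOn n h f : α → ℝ≥0∞) ∈ S :=
    hinf _ fun n => by cases n with
      | zero => exact hh
      | succ n => exact hfS n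
  set m : α → ℝ≥0∞ := ⨅ n, (Nat.casesOn n h f : α → ℝ≥0∞)
  have hmg : m ≤ ⨅ n, f n := le_iInf fun n => iInf_le _ (n + 1)
  have hmh : m ≤ h := iInf_le _ 0
  have hmg_ae : ⨅ n, f n ≤ᵐ[ν.toFinite] m :=
    ae_le_of_lintegral_inv_one_add_le
      ((hmeas m hgh).mono_ac (toFinite_absolutelyContinuous ν)) hmg (hmax m hgh)
  exact (absolutelyContinuous_toFinite ν).ae_le (hmg_ae.mono fun x hx => hx.trans (hmh x))

end EssentialInfimum

section Separability

theorem secondCountableTopology_of_isOpenPosMeasure {Y : Type*} [PseudoMetricSpace Y]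
    [MeasurableSpace Y] [OpensMeasurableSpace Y] (μ : Measure Y) [SFinite μ]
    [μ.IsOpenPosMeasure] : SecondCountableTopology Y := by
  refine Metric.secondCountable_of_almost_dense_set fun ε hε => ?_
  obtain ⟨s, -, hdisj, hcover⟩ := Vitali.exists_disjoint_subfamily_covering_enlargement_closedBall
    (univ : Set Y) id (fun _ => ε / 4) (ε / 4) (fun _ _ => le_rfl) 4 (by norm_num)
  refine ⟨s, ?_, fun x => ?_⟩
  · have hcount := Measure.countable_meas_pos_of_disjoint_iUnion (μ := μ)
      (As := fun i : s => closedBall (i : Y) (ε / 4)) (fun _ => isClosed_closedBall.measurableSet)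
      fun i j hij => hdisj i.2 j.2 fun h => hij (Subtype.ext h)
    have hpos : ∀ i : s, 0 < μ (closedBall (i : Y) (ε / 4)) := fun i =>
      measure_closedBall_pos μ _ (by positivity)
    simp only [hpos, ofPred_true, countable_univ_iff] at hcount
    exact countable_coe_iff.1 hcount
  · obtain ⟨b, hb, hsub⟩ := hcover x trivial
    have hx : dist x b ≤ 4 * (ε / 4) := hsub (mem_closedBall_self (by positivity))
    exact ⟨b, hb, by linarith⟩

omit [BorelSpace X] in
theorem Doubling.isOpenPosMeasure {μ : Measure X} {Cd : ℝ} (h : Doubling μ Cd) :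
    μ.IsOpenPosMeasure := by
  refine ⟨fun U hU ⟨x, hx⟩ => ?_⟩
  obtain ⟨r, hr, hrU⟩ := Metric.isOpen_iff.1 hU x hx
  have hpos := (h.2 x (r / 2) (by positivity)).1
  rw [mul_div_cancel₀ r two_ne_zero] at hpos
  exact (hpos.trans_le (measure_mono hrU)).ne'

omit [BorelSpace X] in
theorem Doubling.sigmaFinite {μ : Measure X} {Cd : ℝ} (h : Doubling μ Cd) : SigmaFinite μ := by
  rcases isEmpty_or_nonempty X with hX | ⟨⟨x₀⟩⟩
  · rw [μ.eq_zero_of_isEmpty]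
    infer_instance
  · exact ⟨⟨⟨fun n : ℕ => ball x₀ (n + 1), fun _ => trivial,
      fun n => (h.2 x₀ _ (by positivity)).2.2, iUnion_ball_nat_succ x₀⟩⟩⟩

end Separability

section Curves

omit [MeasurableSpace X] [BorelSpace X]

/-- The extension of a curve to the real line that is constant on each side of `[0, len]`; unlike
`toFun`, which is arbitrary outside `[0, len]`, it is globally `1`-Lipschitz. -/
def Curve.extend (γ : Curve X) : ℝ → X :=
  IccExtend γ.len_nonneg ((Icc 0 γ.len).domRestrict γ.toFun)

theorem Curve.lipschitzWith_extend (γ : Curve X) : LipschitzWith 1 γ.extend :=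
  one_mul (1 : ℝ≥0) ▸ γ.lip.to_restrict.comp (LipschitzWith.projIcc γ.len_nonneg)

/-- The restriction of a curve to `[a, b]`, reparametrized to start at time `0`. -/
def Curve.subcurve (γ : Curve X) (a b : ℝ) (hab : a ≤ b) : Curve X where
  len := b - a
  len_nonneg := sub_nonneg.2 hab
  toFun s := γ.extend (a + s)
  lip := (one_mul (1 : ℝ≥0) ▸ γ.lipschitzWith_extend.comp
    (LipschitzWith.of_dist_le_mul fun s t => by simp)).lipschitzOnWith

namespace Curve

variable (γ : Curve X)

theorem continuous_extend : Continuous γ.extend := γ.lipschitzWith_extend.continuous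

theorem extend_of_mem {t : ℝ} (ht : t ∈ Icc 0 γ.len) : γ.extend t = γ.toFun t :=
  IccExtend_of_mem γ.len_nonneg _ ht

variable {γ} in
theorem In.extend_mem {A : Set X} (h : γ.In A) (t : ℝ) : γ.extend t ∈ A :=
  h _ (projIcc 0 γ.len γ.len_nonneg t).2

theorem range_extend : range γ.extend = γ.toFun '' Icc 0 γ.len := by
  rw [extend, IccExtend_range, range_domRestrict]

theorem integral_eq_lintegral_extend (g : X → ℝ≥0∞) :
    γ.integral g = ∫⁻ t in Icc 0 γ.len, g (γ.extend t) :=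
  setLIntegral_congr_fun measurableSet_Icc fun t ht => by rw [γ.extend_of_mem ht]

theorem integral_subcurve {a b : ℝ} (hab : a ≤ b) (g : X → ℝ≥0∞) :
    (γ.subcurve a b hab).integral g = ∫⁻ t in Icc a b, g (γ.extend t) := by
  have h := (measurePreserving_add_left volume a).setLIntegral_comp_preimage_emb
    (measurableEmbedding_addLeft a) (fun t => g (γ.extend t)) (Icc a b)
  rwa [preimage_const_add_Icc, sub_self] at h

theorem ugIneq_iff {u : X → ℝ} {g : X → ℝ≥0∞} : UGIneq u g γ ↔
    ‖u (γ.extend γ.len) - u (γ.extend 0)‖ₑ ≤ ∫⁻ t in Icc 0 γ.len, g (γ.extend t) := by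
  rw [UGIneq, γ.integral_eq_lintegral_extend, γ.extend_of_mem (left_mem_Icc.2 γ.len_nonneg),
    γ.extend_of_mem (right_mem_Icc.2 γ.len_nonneg), abs_sub_comm, Real.enorm_eq_ofReal_abs]

theorem ugIneq_subcurve_iff {u : X → ℝ} {g : X → ℝ≥0∞} {a b : ℝ} (hab : a ≤ b) :
    UGIneq u g (γ.subcurve a b hab) ↔
      ‖u (γ.extend b) - u (γ.extend a)‖ₑ ≤ ∫⁻ t in Icc a b, g (γ.extend t) := by
  rw [UGIneq, γ.integral_subcurve hab, abs_sub_comm, Real.enorm_eq_ofReal_abs]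
  simp only [subcurve, add_zero, add_sub_cancel]

end Curve

end Curves

section LocallyLipschitz

theorem locallyLipschitzOn_mul {Y : Type*} [PseudoEMetricSpace Y] {f g : Y → ℝ} {s : Set Y}
    (hf : LocallyLipschitzOn s f) (hg : LocallyLipschitzOn s g) :
    LocallyLipschitzOn s fun y => f y * g y := by
  rw [locallyLipschitzOn_iff_restrict] at hf hg ⊢
  exact (contDiff_mul (𝕜 := ℝ) (n := 1)).locallyLipschitz.comp (hf.prodMk hg)

omit [MeasurableSpace X] [BorelSpace X]

theorem locLipOn_iff_locallyLipschitzOn {u : X → ℝ} {A : Set X} :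
    LocLipOn u A ↔ LocallyLipschitzOn A u := by
  constructor
  · intro h x hx
    obtain ⟨r, hr, K, hK⟩ := h x hx
    exact ⟨K, _, inter_mem_nhdsWithin A (ball_mem_nhds x hr), hK⟩
  · intro h x hx
    obtain ⟨K, t, ht, hK⟩ := h hx
    obtain ⟨r, hr, hrt⟩ := Metric.mem_nhdsWithin_iff.1 ht
    exact ⟨r, hr, K, hK.mono (inter_comm A _ ▸ hrt)⟩

theorem LocLipOn.continuousOn {u : X → ℝ} {A : Set X} (h : LocLipOn u A) : ContinuousOn u A :=
  (locLipOn_iff_locallyLipschitzOn.1 h).continuousOn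

theorem LocLipOn.exists_lipschitzWith_comp_extend {u : X → ℝ} {A : Set X} (h : LocLipOn u A)
    {γ : Curve X} (hγ : γ.In A) : ∃ K : ℝ≥0, LipschitzWith K (u ∘ γ.extend) := by
  have hcompact : IsCompact (range γ.extend) :=
    γ.range_extend ▸ isCompact_Icc.image_of_continuousOn γ.lip.continuousOn
  obtain ⟨K, hK⟩ := ((locLipOn_iff_locallyLipschitzOn.1 h).mono
    (range_subset_iff.2 hγ.extend_mem)).exists_lipschitzOnWith_of_compact hcompact
  exact ⟨K * 1, lipschitzOnWith_univ.1 <|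
    hK.comp γ.lipschitzWith_extend.lipschitzOnWith fun t _ => mem_range_self t⟩

end LocallyLipschitz

section ModulusFilter

omit [BorelSpace X]

variable {μ : Measure X}

theorem ZeroMod.mono {Γ Γ' : Set (Curve X)} (h : ZeroMod μ Γ') (hsub : Γ ⊆ Γ') : ZeroMod μ Γ :=
  let ⟨ρ, hρ, hfin, htop⟩ := h
  ⟨ρ, hρ, hfin, fun γ hγ => htop γ (hsub hγ)⟩

theorem ZeroMod.sUnion {S : Set (Set (Curve X))} (hS : S.Countable) (h : ∀ Γ ∈ S, ZeroMod μ Γ) :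
    ZeroMod μ (⋃₀ S) := by
  have := hS.to_subtype
  choose ρ hρ hfin htop using fun Γ : S => h Γ Γ.2
  obtain ⟨δ, hδ, hsum⟩ := ENNReal.exists_pos_tsum_mul_lt_of_countable one_ne_zero
    (fun Γ : S => ∫⁻ x, ρ Γ x ∂μ) fun Γ => (hfin Γ).ne
  refine ⟨fun x => ∑' Γ, δ Γ * ρ Γ x, Measurable.tsum fun Γ => (hρ Γ).const_mul _, ?_, ?_⟩
  · rw [lintegral_tsum fun Γ => ((hρ Γ).const_mul _).aemeasurable]
    refine (tsum_congr fun Γ => ?_).trans_lt (hsum.trans ENNReal.one_lt_top)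
    rw [lintegral_const_mul _ (hρ Γ), mul_comm]
  · rintro γ ⟨Γ, hΓ, hγ⟩
    refine top_unique ?_
    calc ∞ = δ ⟨Γ, hΓ⟩ * γ.integral (ρ ⟨Γ, hΓ⟩) := by
          rw [htop _ γ hγ, ENNReal.mul_top (ENNReal.coe_ne_zero.2 (hδ _).ne')]
      _ = ∫⁻ t in Icc 0 γ.len, δ ⟨Γ, hΓ⟩ * ρ ⟨Γ, hΓ⟩ (γ.toFun t) :=
          (lintegral_const_mul' _ _ ENNReal.coe_ne_top).symm
      _ ≤ γ.integral fun x => ∑' Γ, δ Γ * ρ Γ x := lintegral_mono fun t =>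
          ENNReal.le_tsum (f := fun Γ : S => δ Γ * ρ Γ (γ.toFun t)) ⟨Γ, hΓ⟩

variable (μ) in
/-- The filter of properties that hold along `1`-almost every curve, i.e. outside a family of
curves of zero `1`-modulus. -/
def curveAE : Filter (Curve X) :=
  Filter.ofCountableUnion {Γ | ZeroMod μ Γ} (fun _ hS h => ZeroMod.sUnion hS h)
    fun _ h _ hsub => h.mono hsub

instance : CountableInterFilter (curveAE μ) :=
  inferInstanceAs (CountableInterFilter (Filter.ofCountableUnion _ _ _))

theorem eventually_curveAE_iff {p : Curve X → Prop} :
    (∀ᶠ γ in curveAE μ, p γ) ↔ ZeroMod μ {γ | ¬p γ} :=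
  Iff.rfl

theorem isWeakUpperGradientOn_iff {u : X → ℝ} {g : X → ℝ≥0∞} {A : Set X} :
    IsWeakUpperGradientOn μ u g A ↔
      AEMeasurable g μ ∧ ∀ᶠ γ in curveAE μ, γ.In A → UGIneq u g γ := by
  simp only [IsWeakUpperGradientOn, eventually_curveAE_iff, Classical.not_imp]

theorem eventually_curveAE_subcurve {p : Curve X → Prop} (h : ∀ᶠ γ in curveAE μ, p γ) :
    ∀ᶠ γ in curveAE μ, ∀ a b (hab : a ≤ b), 0 ≤ a → b ≤ γ.len → p (γ.subcurve a b hab) := by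
  obtain ⟨ρ, hρ, hfin, htop⟩ := eventually_curveAE_iff.1 h
  refine eventually_curveAE_iff.2 ⟨ρ, hρ, hfin, fun γ hγ => ?_⟩
  simp only [mem_ofPred_eq, not_forall] at hγ
  obtain ⟨a, b, hab, ha, hb, hp⟩ := hγ
  refine top_unique ?_
  rw [← htop _ hp, γ.integral_subcurve hab, γ.integral_eq_lintegral_extend]
  exact lintegral_mono_set (Icc_subset_Icc ha hb)

end ModulusFilter

section AlongCurves

variable {μ : Measure X}

theorem eventually_curveAE_ae_of_ae {p : X → Prop} (h : ∀ᵐ x ∂μ, p x) :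
    ∀ᶠ γ in curveAE μ, ∀ᵐ t ∂volume.restrict (Icc 0 γ.len), p (γ.extend t) := by
  obtain ⟨N, hN, hNmeas, hNnull⟩ := exists_measurable_superset_of_null (ae_iff.1 h)
  have hmeas : Measurable (N.indicator fun _ => (∞ : ℝ≥0∞)) := measurable_const.indicator hNmeas
  refine eventually_curveAE_iff.2 ⟨_, hmeas, ?_, fun γ hγ => ?_⟩
  · simp [lintegral_indicator hNmeas, hNnull]
  · by_contra hfin
    rw [γ.integral_eq_lintegral_extend] at hfin
    refine hγ ?_
    filter_upwards [ae_lt_top (hmeas.comp γ.continuous_extend.measurable) hfin] with t ht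
    by_contra hp
    exact ht.ne (indicator_of_mem (hN hp) _)

theorem eventually_curveAE_aemeasurable {g : X → ℝ≥0∞} (hg : AEMeasurable g μ) :
    ∀ᶠ γ in curveAE μ, AEMeasurable (fun t => g (γ.extend t)) (volume.restrict (Icc 0 γ.len)) := by
  filter_upwards [eventually_curveAE_ae_of_ae hg.ae_eq_mk] with γ hγ
  exact ⟨_, hg.measurable_mk.comp γ.continuous_extend.measurable, hγ⟩

theorem eventually_curveAE_integral_ne_top {ρ : X → ℝ≥0∞} (hρ : AEMeasurable ρ μ)
    (hfin : ∫⁻ x, ρ x ∂μ ≠ ∞) : ∀ᶠ γ in curveAE μ, γ.integral ρ ≠ ∞ := by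
  have hmk : ∀ᶠ γ in curveAE μ, γ.integral (hρ.mk ρ) ≠ ∞ :=
    eventually_curveAE_iff.2 ⟨_, hρ.measurable_mk,
      lintegral_congr_ae hρ.ae_eq_mk ▸ hfin.lt_top, fun γ hγ => not_not.1 hγ⟩
  filter_upwards [hmk, eventually_curveAE_ae_of_ae hρ.ae_eq_mk] with γ hγ heq
  rw [γ.integral_eq_lintegral_extend] at hγ ⊢
  rwa [lintegral_congr_ae heq]

-- The set may be covered by countably many balls on which `g` is integrable; a curve is compact,
-- so finitely many of them suffice for it.
theorem LIntegrableLocOn.eventually_integral_ne_top [SecondCountableTopology X] {g : X → ℝ≥0∞}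
    {A : Set X} (hg : LIntegrableLocOn μ g A) (hgm : AEMeasurable g μ) (hA : MeasurableSet A) :
    ∀ᶠ γ in curveAE μ, γ.In A → γ.integral g ≠ ∞ := by
  choose! r hr hfin using hg
  obtain ⟨T, hTA, hT, hcover⟩ := TopologicalSpace.countable_cover_nhdsWithin
    fun x hx => mem_nhdsWithin_of_mem_nhds (t := A) (ball_mem_nhds x (hr x hx))
  have hball : ∀ x, MeasurableSet (A ∩ ball x (r x)) := fun x => hA.inter measurableSet_ball
  have hind : ∀ᶠ γ in curveAE μ, ∀ x ∈ T, γ.integral ((A ∩ ball x (r x)).indicator g) ≠ ∞ :=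
    (eventually_countable_ball hT).2 fun x hx =>
      eventually_curveAE_integral_ne_top (hgm.indicator (hball x))
        (lintegral_indicator (hball x) g ▸ (hfin x (hTA hx)).ne)
  filter_upwards [hind] with γ hγ hin
  rw [γ.integral_eq_lintegral_extend]
  refine isCompact_Icc.induction_on (p := fun s => ∫⁻ t in s, g (γ.extend t) ≠ ∞) (by simp)
    (fun s t hst ht => ne_top_of_le_ne_top ht (lintegral_mono_set hst))
    (fun s t hs ht => ne_top_of_le_ne_top (ENNReal.add_ne_top.2 ⟨hs, ht⟩)
      (lintegral_union_le _ s t)) fun t _ => ?_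
  obtain ⟨x, hx, htx⟩ := mem_iUnion₂.1 (hcover (hin.extend_mem t))
  refine ⟨Icc 0 γ.len ∩ γ.extend ⁻¹' ball x (r x),
    inter_mem_nhdsWithin _ ((isOpen_ball.preimage γ.continuous_extend).mem_nhds htx), ?_⟩
  have hmeas : MeasurableSet (Icc 0 γ.len ∩ γ.extend ⁻¹' ball x (r x)) :=
    measurableSet_Icc.inter (isOpen_ball.preimage γ.continuous_extend).measurableSet
  refine ne_top_of_le_ne_top (γ.integral_eq_lintegral_extend _ ▸ hγ x hx) ?_
  refine (setLIntegral_congr_fun hmeas fun s hs => ?_).trans_le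
    (lintegral_mono_set inter_subset_left)
  exact (indicator_of_mem (show γ.extend s ∈ A ∩ _ from ⟨hin.extend_mem s, hs.2⟩) g).symm

end AlongCurves

section DerivativeBound

variable {μ : Measure X} {u : X → ℝ} {g : X → ℝ≥0∞} {A : Set X}

/-- `g` is a `μ`-measurable function that dominates the derivative of `u` almost everywhere along
`1`-almost every curve in `A`. For locally Lipschitz `u` such `g` are weak upper gradients, and in
contrast to the upper gradient inequality the pointwise bound is stable under infima. -/
def BoundsDerivAlongCurves (μ : Measure X) (u : X → ℝ) (g : X → ℝ≥0∞) (A : Set X) : Prop :=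
  AEMeasurable g μ ∧ ∀ᶠ γ in curveAE μ, γ.In A →
    ∀ᵐ t ∂volume.restrict (Icc 0 γ.len), ‖deriv (u ∘ γ.extend) t‖ₑ ≤ g (γ.extend t)

omit [BorelSpace X] in
theorem BoundsDerivAlongCurves.isWeakUpperGradientOn (h : BoundsDerivAlongCurves μ u g A)
    (hu : LocLipOn u A) : IsWeakUpperGradientOn μ u g A := by
  refine isWeakUpperGradientOn_iff.2 ⟨h.1, ?_⟩
  filter_upwards [h.2] with γ hderiv hγ
  obtain ⟨K, hK⟩ := hu.exists_lipschitzWith_comp_extend hγ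
  rw [γ.ugIneq_iff]
  calc ‖u (γ.extend γ.len) - u (γ.extend 0)‖ₑ
      = ‖∫ t in (0 : ℝ)..γ.len, deriv (u ∘ γ.extend) t‖ₑ := by
        rw [hK.lipschitzOnWith.absolutelyContinuousOnInterval.integral_deriv_eq_sub]
        rfl
    _ ≤ ∫⁻ t in Icc 0 γ.len, ‖deriv (u ∘ γ.extend) t‖ₑ := by
        rw [intervalIntegral.integral_of_le γ.len_nonneg, ← integral_Icc_eq_integral_Ioc]
        exact enorm_integral_le_lintegral_enorm _
    _ ≤ ∫⁻ t in Icc 0 γ.len, g (γ.extend t) := lintegral_mono_ae (hderiv hγ)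

theorem IsWeakUpperGradientOn.boundsDerivAlongCurves [SecondCountableTopology X]
    (h : IsWeakUpperGradientOn μ u g A) (hg : LIntegrableLocOn μ g A) (hA : MeasurableSet A) :
    BoundsDerivAlongCurves μ u g A := by
  obtain ⟨hgm, hug⟩ := isWeakUpperGradientOn_iff.1 h
  refine ⟨hgm, ?_⟩
  filter_upwards [eventually_curveAE_subcurve hug, eventually_curveAE_aemeasurable hgm,
    hg.eventually_integral_ne_top hgm hA] with γ hsub hmeas hfin hγ
  refine ae_enorm_deriv_le_of_enorm_sub_le_lintegral hmeas
    (γ.integral_eq_lintegral_extend g ▸ hfin hγ) fun s t hs hst ht => ?_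
  exact (γ.ugIneq_subcurve_iff hst).1 (hsub s t hst hs ht fun r _ => hγ.extend_mem _)

omit [BorelSpace X] in
theorem BoundsDerivAlongCurves.iInf {g : ℕ → X → ℝ≥0∞}
    (h : ∀ n, BoundsDerivAlongCurves μ u (g n) A) :
    BoundsDerivAlongCurves μ u (⨅ n, g n) A := by
  have hmeas : AEMeasurable (⨅ n, g n) μ := by
    rw [show ⨅ n, g n = fun x => ⨅ n, g n x from funext fun x => iInf_apply]
    exact AEMeasurable.iInf fun n => (h n).1
  refine ⟨hmeas, ?_⟩
  filter_upwards [eventually_countable_forall.2 fun n => (h n).2] with γ hγ hin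
  filter_upwards [ae_all_iff.2 fun n => hγ n hin] with t ht
  exact (le_iInf ht).trans_eq (iInf_apply).symm

omit [BorelSpace X] in
theorem boundsDerivAlongCurves_top : BoundsDerivAlongCurves μ u ⊤ A :=
  ⟨measurable_const.aemeasurable,
    Eventually.of_forall fun _ _ => ae_of_all _ fun _ => le_top⟩

theorem LocLipOn.exists_isMinimalWUG [SecondCountableTopology X] [SFinite μ] (hu : LocLipOn u A)
    (hA : MeasurableSet A) : ∃ g, IsMinimalWUG μ u g A ∧
      ∀ g', BoundsDerivAlongCurves μ u g' A → g ≤ᵐ[μ] g' := by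
  obtain ⟨g, hg, hmin⟩ := exists_forall_ae_le_of_iInf_mem μ
    (S := {g | BoundsDerivAlongCurves μ u g A}) ⟨⊤, boundsDerivAlongCurves_top⟩
    (fun f hf => hf.1) fun f hf => BoundsDerivAlongCurves.iInf hf
  exact ⟨g, ⟨hg.isWeakUpperGradientOn hu, fun g' hg' hloc =>
    ae_restrict_of_ae (hmin g' (hg'.boundsDerivAlongCurves hloc hA))⟩, hmin⟩

end DerivativeBound

section LipschitzPartitions

/-- A locally finite partition of unity on a neighbourhood of `A`, made of Lipschitz functions
vanishing outside the sets `U i`. -/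
structure LipschitzPartition (A : Set X) (U : ℕ → Set X) where
  weight : ℕ → X → ℝ
  lipConst : ℕ → ℝ≥0
  lipschitzWith : ∀ i, LipschitzWith (lipConst i) (weight i)
  nonneg : ∀ i x, 0 ≤ weight i x
  support_subset : ∀ i, Function.support (weight i) ⊆ U i
  exists_finite_sum_eq_one : ∀ x ∈ A, ∃ N, ∀ᶠ y in 𝓝 x,
    (∀ i ≥ N, weight i y = 0) ∧ ∑ i ∈ Finset.range N, weight i y = 1

omit [MeasurableSpace X] [BorelSpace X]

theorem lipschitzWith_sum_range {f : ℕ → X → ℝ} {K : ℕ → ℝ≥0} (hf : ∀ i, LipschitzWith (K i) (f i))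
    (n : ℕ) : LipschitzWith (∑ i ∈ Finset.range n, K i) fun x => ∑ i ∈ Finset.range n, f i x := by
  induction n with
  | zero => simp
  | succ n ih => simpa only [Finset.sum_range_succ] using ih.add (hf n)

/-- The partition of unity whose partial sums are the truncations at `1` of the partial sums of
the bump functions `f i`. -/
def LipschitzPartition.ofBumps {A : Set X} {U : ℕ → Set X} (f : ℕ → X → ℝ) (K : ℕ → ℝ≥0)
    (hlip : ∀ i, LipschitzWith (K i) (f i)) (hnonneg : ∀ i x, 0 ≤ f i x)
    (hsupp : ∀ i, Function.support (f i) ⊆ U i)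
    (hone : ∀ x ∈ A, ∃ i, ∀ᶠ y in 𝓝 x, 1 ≤ f i y) : LipschitzPartition A U where
  weight i x :=
    min 1 (∑ j ∈ Finset.range (i + 1), f j x) - min 1 (∑ j ∈ Finset.range i, f j x)
  lipConst i := ∑ j ∈ Finset.range (i + 1), K j + ∑ j ∈ Finset.range i, K j
  lipschitzWith i := ((lipschitzWith_sum_range hlip (i + 1)).const_min 1).sub
    ((lipschitzWith_sum_range hlip i).const_min 1)
  nonneg i x := by
    rw [Finset.sum_range_succ, sub_nonneg]
    exact min_le_min_left 1 (le_add_of_nonneg_right (hnonneg i x))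
  support_subset i x hx := hsupp i fun hzero => hx <| by
    simp only [Finset.sum_range_succ, hzero, add_zero, sub_self]
  exists_finite_sum_eq_one x hx := by
    obtain ⟨i, hi⟩ := hone x hx
    refine ⟨i + 1, hi.mono fun y hy => ?_⟩
    have htrunc : ∀ n ≥ i + 1, min 1 (∑ j ∈ Finset.range n, f j y) = 1 := fun n hn =>
      min_eq_left <| hy.trans <| Finset.single_le_sum (fun j _ => hnonneg j y)
        (Finset.mem_range.2 hn)
    refine ⟨fun n hn => ?_, ?_⟩
    · rw [htrunc n hn, htrunc (n + 1) (hn.trans n.le_succ), sub_self]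
    · rw [Finset.sum_range_sub fun n => min 1 (∑ j ∈ Finset.range n, f j y), htrunc _ le_rfl]
      simp

theorem exists_lipschitz_bump (c : X) {r : ℝ} (hr : 0 < r) : ∃ (f : X → ℝ) (K : ℝ≥0),
    LipschitzWith K f ∧ (∀ x, 0 ≤ f x) ∧ Function.support f ⊆ ball c r ∧
      ∀ x ∈ ball c (r / 2), 1 ≤ f x := by
  have hr2 : 0 < r / 2 := half_pos hr
  refine ⟨fun x => thickenedIndicator hr2 (ball c (r / 2)) x, _,
    NNReal.isometry_coe.lipschitz.comp (lipschitzWith_thickenedIndicator hr2 _),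
    fun x => NNReal.coe_nonneg _, fun x hx => ?_, fun x hx => ?_⟩
  · by_contra hfar
    refine hx (NNReal.coe_eq_zero.2 (thickenedIndicator_zero hr2 _ fun hnear => hfar ?_))
    obtain ⟨y, hy, hxy⟩ := mem_thickening_iff.1 hnear
    rw [mem_ball] at hy ⊢
    linarith [dist_triangle x y c]
  · exact (NNReal.coe_eq_one.2 (thickenedIndicator_one hr2 _ hx)).ge

theorem exists_lipschitzPartition [SecondCountableTopology X] {A : Set X} {p : Set X → Prop}
    (hempty : p ∅) (hball : ∀ x ∈ A, ∃ r > 0, p (ball x r)) :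
    ∃ U : ℕ → Set X, (∀ i, p (U i)) ∧ Nonempty (LipschitzPartition A U) := by
  rcases A.eq_empty_or_nonempty with rfl | hA
  · exact ⟨fun _ => ∅, fun _ => hempty, ⟨.ofBumps 0 0 (fun _ => LipschitzWith.const 0)
      (fun _ _ => le_rfl) (by simp) (by simp)⟩⟩
  choose! r hr hpr using hball
  obtain ⟨T, hTA, hT, hcover⟩ := TopologicalSpace.countable_cover_nhdsWithin fun x hx =>
    mem_nhdsWithin_of_mem_nhds (t := A) (ball_mem_nhds x (half_pos (hr x hx)))
  obtain ⟨c, rfl⟩ := hT.exists_eq_range <| nonempty_iff_ne_empty.2 fun hT => by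
    simp [hT, hA.ne_empty] at hcover
  have hcA : ∀ i, c i ∈ A := fun i => hTA (mem_range_self i)
  choose f K hlip hnonneg hsupp hone using fun i => exists_lipschitz_bump (c i) (hr _ (hcA i))
  refine ⟨fun i => ball (c i) (r (c i)), fun i => hpr _ (hcA i),
    ⟨.ofBumps f K hlip hnonneg hsupp fun x hx => ?_⟩⟩
  rw [biUnion_range] at hcover
  obtain ⟨i, hi⟩ := mem_iUnion.1 (hcover hx)
  exact ⟨i, (isOpen_ball.eventually_mem hi).mono (hone i)⟩

end LipschitzPartitions

namespace LipschitzPartition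

variable {A : Set X} {U : ℕ → Set X} (P : LipschitzPartition A U)

section Pointwise

omit [MeasurableSpace X] [BorelSpace X]

/-- The function obtained by averaging the functions `v i` with the weights of the partition; on
`A` the sum is locally finite. -/
def glue (v : ℕ → X → ℝ) (x : X) : ℝ :=
  ∑' i, P.weight i x * v i x

/-- The distance from `v i` to `u` on the set where the `i`-th weight does not vanish. -/
def localError (v : ℕ → X → ℝ) (u : X → ℝ) (i : ℕ) : X → ℝ≥0∞ :=
  (Function.support (P.weight i)).indicator fun x => ‖v i x - u x‖ₑ

/-- The bound for the derivative of `P.glue v` along curves in `A` that the Leibniz rule gives when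
`g i` is such a bound for `v i`; since the derivatives of the weights sum to zero, `u` may be
subtracted from each `v i`. -/
def gluedGradient (v : ℕ → X → ℝ) (g : ℕ → X → ℝ≥0∞) (u : X → ℝ) : X → ℝ≥0∞ :=
  A.indicator fun x => ∑' i, (‖P.weight i x‖ₑ * g i x + P.lipConst i * P.localError v u i x)

theorem glue_eq_sum (v : ℕ → X → ℝ) {x : X} {N : ℕ} (h : ∀ i ≥ N, P.weight i x = 0) :
    P.glue v x = ∑ i ∈ Finset.range N, P.weight i x * v i x :=
  tsum_eq_sum fun i hi => by rw [h i (by simpa using hi), zero_mul]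

theorem tsum_enorm_weight {x : X} (hx : x ∈ A) : ∑' i, ‖P.weight i x‖ₑ = 1 := by
  obtain ⟨N, hN⟩ := P.exists_finite_sum_eq_one x hx
  obtain ⟨hzero, hone⟩ := hN.self_of_nhds
  rw [tsum_eq_sum (s := Finset.range N) fun i hi => by rw [hzero i (by simpa using hi), enorm_zero]]
  simp only [Real.enorm_of_nonneg (P.nonneg _ x)]
  rw [← ENNReal.ofReal_sum_of_nonneg fun i _ => P.nonneg i x, hone, ENNReal.ofReal_one]

theorem locLipOn_glue {v : ℕ → X → ℝ} (hv : ∀ i, LocLipOn (v i) A) : LocLipOn (P.glue v) A := by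
  simp only [locLipOn_iff_locallyLipschitzOn] at hv ⊢
  intro x hx
  obtain ⟨N, hN⟩ := P.exists_finite_sum_eq_one x hx
  have hsum : ∀ n, LocallyLipschitzOn A fun y => ∑ i ∈ Finset.range n, P.weight i y * v i y := by
    intro n
    induction n with
    | zero => simpa using (LocallyLipschitz.const (0 : ℝ)).locallyLipschitzOn
    | succ n ih =>
      simpa only [Finset.sum_range_succ] using ih.add
        (locallyLipschitzOn_mul (P.lipschitzWith n).locallyLipschitz.locallyLipschitzOn (hv n))
  obtain ⟨K, t, ht, hK⟩ := hsum N hx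
  refine ⟨K, _, inter_mem ht (mem_nhdsWithin_of_mem_nhds hN), fun y hy z hz => ?_⟩
  rw [P.glue_eq_sum v hy.2.1, P.glue_eq_sum v hz.2.1]
  exact hK hy.1 hz.1

theorem enorm_glue_sub_le (v : ℕ → X → ℝ) (u : X → ℝ) {x : X} (hx : x ∈ A) :
    ‖P.glue v x - u x‖ₑ ≤ ∑' i, P.localError v u i x := by
  obtain ⟨N, hN⟩ := P.exists_finite_sum_eq_one x hx
  obtain ⟨hzero, hone⟩ := hN.self_of_nhds
  have hweight : ∀ i, ‖P.weight i x‖ₑ ≤ 1 := fun i =>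
    (ENNReal.le_tsum i).trans_eq (P.tsum_enorm_weight hx)
  have hterm : ∀ i, ‖P.weight i x * (v i x - u x)‖ₑ ≤ P.localError v u i x := fun i => by
    by_cases h : P.weight i x = 0
    · simp [h]
    · rw [localError, indicator_of_mem (Function.mem_support.2 h), enorm_mul]
      exact mul_le_of_le_one_left' (hweight i)
  calc ‖P.glue v x - u x‖ₑ = ‖∑ i ∈ Finset.range N, P.weight i x * (v i x - u x)‖ₑ := by
        simp only [P.glue_eq_sum v hzero, mul_sub, Finset.sum_sub_distrib, ← Finset.sum_mul, hone,
          one_mul]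
    _ ≤ ∑ i ∈ Finset.range N, ‖P.weight i x * (v i x - u x)‖ₑ := enorm_sum_le _ _
    _ ≤ ∑ i ∈ Finset.range N, P.localError v u i x := Finset.sum_le_sum fun i _ => hterm i
    _ ≤ ∑' i, P.localError v u i x := ENNReal.sum_le_tsum _

end Pointwise

section Derivatives

omit [MeasurableSpace X] [BorelSpace X]

variable (γ : Curve X)

theorem lipschitzWith_weight_comp_extend (i : ℕ) :
    LipschitzWith (P.lipConst i) (P.weight i ∘ γ.extend) :=
  mul_one (P.lipConst i) ▸ (P.lipschitzWith i).comp γ.lipschitzWith_extend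

theorem enorm_deriv_weight_mul_le (v : ℕ → X → ℝ) (u : X → ℝ) (i : ℕ) (t : ℝ) :
    ‖deriv (P.weight i ∘ γ.extend) t * (v i (γ.extend t) - u (γ.extend t))‖ₑ ≤
      P.lipConst i * P.localError v u i (γ.extend t) := by
  by_cases h : P.weight i (γ.extend t) = 0
  · have hmin : IsLocalMin (P.weight i ∘ γ.extend) t := Eventually.of_forall fun s => by
      simpa only [Function.comp_apply, h] using P.nonneg i (γ.extend s)
    simp [hmin.deriv_eq_zero]
  · rw [localError, indicator_of_mem (Function.mem_support.2 h), enorm_mul]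
    gcongr
    rw [← ENNReal.ofReal_coe_nnreal, ← ofReal_norm]
    exact ENNReal.ofReal_le_ofReal
      (norm_deriv_le_of_lipschitz (P.lipschitzWith_weight_comp_extend γ i))

variable {γ} {v : ℕ → X → ℝ}

theorem enorm_deriv_glue_le {g : ℕ → X → ℝ≥0∞} (u : X → ℝ) (hγ : γ.In A) {t : ℝ}
    (hweight : ∀ i, DifferentiableAt ℝ (P.weight i ∘ γ.extend) t)
    (hv : ∀ i, DifferentiableAt ℝ (v i ∘ γ.extend) t)
    (hg : ∀ i, ‖deriv (v i ∘ γ.extend) t‖ₑ ≤ g i (γ.extend t)) :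
    ‖deriv (P.glue v ∘ γ.extend) t‖ₑ ≤ P.gluedGradient v g u (γ.extend t) := by
  obtain ⟨N, hN⟩ := P.exists_finite_sum_eq_one _ (hγ.extend_mem t)
  have hnear := γ.continuous_extend.continuousAt.eventually hN
  have hderiv := (hasDerivAt_sum_mul_of_eventually_sum_eq_one (s := Finset.range N)
    (fun i _ => (hweight i).hasDerivAt) (fun i _ => (hv i).hasDerivAt)
    (hnear.mono fun s hs => hs.2) (u (γ.extend t))).congr_of_eventuallyEq
      (hnear.mono fun s hs => P.glue_eq_sum v hs.1)
  rw [show deriv (P.glue v ∘ γ.extend) t = _ from hderiv.deriv, gluedGradient,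
    indicator_of_mem (hγ.extend_mem t)]
  refine (enorm_sum_le _ _).trans <| (Finset.sum_le_sum fun i _ => ?_).trans <|
    ENNReal.sum_le_tsum (Finset.range N)
  refine (enorm_add_le _ _).trans (add_le_add ?_ (P.enorm_deriv_weight_mul_le γ v u i t))
  rw [enorm_mul]
  exact mul_le_mul_right (hg i) _

theorem ae_enorm_deriv_glue_le {g : ℕ → X → ℝ≥0∞} (u : X → ℝ) (hγ : γ.In A)
    (hv : ∀ i, LocLipOn (v i) A)
    (hg : ∀ i, ∀ᵐ t ∂volume.restrict (Icc 0 γ.len),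
      ‖deriv (v i ∘ γ.extend) t‖ₑ ≤ g i (γ.extend t)) :
    ∀ᵐ t ∂volume.restrict (Icc 0 γ.len),
      ‖deriv (P.glue v ∘ γ.extend) t‖ₑ ≤ P.gluedGradient v g u (γ.extend t) := by
  have hweight_diff : ∀ᵐ t, ∀ i, DifferentiableAt ℝ (P.weight i ∘ γ.extend) t :=
    ae_all_iff.2 fun i => (P.lipschitzWith_weight_comp_extend γ i).ae_differentiableAt_real
  have hv_diff : ∀ᵐ t, ∀ i, DifferentiableAt ℝ (v i ∘ γ.extend) t :=
    ae_all_iff.2 fun i =>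
      let ⟨_, hK⟩ := (hv i).exists_lipschitzWith_comp_extend hγ
      hK.ae_differentiableAt_real
  filter_upwards [ae_restrict_of_ae hweight_diff, ae_restrict_of_ae hv_diff, ae_all_iff.2 hg]
    with t hweight_t hv_t hg_t using P.enorm_deriv_glue_le u hγ hweight_t hv_t hg_t

end Derivatives

section Integrals

variable {v : ℕ → X → ℝ} {g : ℕ → X → ℝ≥0∞} {u : X → ℝ} {μ : Measure X}

theorem measurable_enorm_weight (i : ℕ) : Measurable fun x => ‖P.weight i x‖ₑ :=
  (P.lipschitzWith i).continuous.measurable.enorm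

theorem aemeasurable_localError {ν : Measure X} {i : ℕ} (hv : AEMeasurable (v i) ν)
    (hu : AEMeasurable u ν) : AEMeasurable (P.localError v u i) ν :=
  (hv.sub hu).enorm.indicator
    (isOpen_ne_fun (P.lipschitzWith i).continuous continuous_const).measurableSet

theorem boundsDerivAlongCurves_glue (hA : MeasurableSet A) (hv : ∀ i, LocLipOn (v i) A)
    (hg : ∀ i, BoundsDerivAlongCurves μ (v i) (g i) A) (hu : AEMeasurable u (μ.restrict A)) :
    BoundsDerivAlongCurves μ (P.glue v) (P.gluedGradient v g u) A := by
  refine ⟨(aemeasurable_indicator_iff hA).2 <| AEMeasurable.tsum fun i =>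
    ((P.measurable_enorm_weight i).aemeasurable.mul (hg i).1.restrict).add
      ((P.aemeasurable_localError ((hv i).continuousOn.aemeasurable hA) hu).const_mul _), ?_⟩
  filter_upwards [eventually_countable_forall.2 fun i => (hg i).2] with γ hγ hin
  exact P.ae_enorm_deriv_glue_le u hin hv fun i => hγ i hin

theorem tsum_setLIntegral_enorm_weight_mul (hA : MeasurableSet A) {f : X → ℝ≥0∞}
    (hf : AEMeasurable f (μ.restrict A)) :
    ∑' i, ∫⁻ x in A, ‖P.weight i x‖ₑ * f x ∂μ = ∫⁻ x in A, f x ∂μ := by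
  have hmeas : ∀ i, AEMeasurable (fun x => ‖P.weight i x‖ₑ * f x) (μ.restrict A) := fun i =>
    (P.measurable_enorm_weight i).aemeasurable.mul hf
  rw [← lintegral_tsum hmeas]
  refine setLIntegral_congr_fun hA fun x hx => ?_
  rw [ENNReal.tsum_mul_right, P.tsum_enorm_weight hx, one_mul]

theorem setLIntegral_localError_le (i : ℕ) :
    ∫⁻ x in A, P.localError v u i x ∂μ ≤ ∫⁻ x in A ∩ U i, ‖v i x - u x‖ₑ ∂μ := by
  have hsupp : MeasurableSet (Function.support (P.weight i)) :=
    (isOpen_ne_fun (P.lipschitzWith i).continuous continuous_const).measurableSet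
  simp only [localError]
  rw [setLIntegral_indicator hsupp, inter_comm]
  exact lintegral_mono_set (inter_subset_inter_right A (P.support_subset i))

theorem setLIntegral_enorm_glue_sub_le (hA : MeasurableSet A)
    (hv : ∀ i, AEMeasurable (v i) (μ.restrict A)) (hu : AEMeasurable u (μ.restrict A)) :
    ∫⁻ x in A, ‖P.glue v x - u x‖ₑ ∂μ ≤ ∑' i, ∫⁻ x in A ∩ U i, ‖v i x - u x‖ₑ ∂μ :=
  calc ∫⁻ x in A, ‖P.glue v x - u x‖ₑ ∂μ
      ≤ ∫⁻ x in A, ∑' i, P.localError v u i x ∂μ :=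
        setLIntegral_mono' hA fun _ hx => P.enorm_glue_sub_le v u hx
    _ = ∑' i, ∫⁻ x in A, P.localError v u i x ∂μ :=
        lintegral_tsum fun i => P.aemeasurable_localError (hv i) hu
    _ ≤ ∑' i, ∫⁻ x in A ∩ U i, ‖v i x - u x‖ₑ ∂μ :=
        ENNReal.tsum_le_tsum P.setLIntegral_localError_le

theorem setLIntegral_gluedGradient_le (hA : MeasurableSet A)
    (hv : ∀ i, AEMeasurable (v i) (μ.restrict A)) (hg : ∀ i, AEMeasurable (g i) (μ.restrict A))
    (hu : AEMeasurable u (μ.restrict A)) :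
    ∫⁻ x in A, P.gluedGradient v g u x ∂μ ≤ ∑' i, ∫⁻ x in A, ‖P.weight i x‖ₑ * g i x ∂μ +
      ∑' i, P.lipConst i * ∫⁻ x in A ∩ U i, ‖v i x - u x‖ₑ ∂μ := by
  have hmain : ∀ i, AEMeasurable (fun x => ‖P.weight i x‖ₑ * g i x) (μ.restrict A) := fun i =>
    (P.measurable_enorm_weight i).aemeasurable.mul (hg i)
  have herr := fun i => P.aemeasurable_localError (hv i) hu
  have hsum : ∀ i, AEMeasurable (fun x => ‖P.weight i x‖ₑ * g i x +
      P.lipConst i * P.localError v u i x) (μ.restrict A) := fun i =>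
    (hmain i).add ((herr i).const_mul _)
  calc ∫⁻ x in A, P.gluedGradient v g u x ∂μ
      = ∫⁻ x in A, ∑' i,
          (‖P.weight i x‖ₑ * g i x + P.lipConst i * P.localError v u i x) ∂μ :=
        setLIntegral_congr_fun hA fun x hx => indicator_of_mem hx _
    _ = ∑' i, (∫⁻ x in A, ‖P.weight i x‖ₑ * g i x ∂μ +
          P.lipConst i * ∫⁻ x in A, P.localError v u i x ∂μ) := by
        rw [lintegral_tsum hsum]
        refine tsum_congr fun i => ?_
        rw [lintegral_add_left' (hmain i), lintegral_const_mul'' _ (herr i)]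
    _ ≤ ∑' i, ∫⁻ x in A, ‖P.weight i x‖ₑ * g i x ∂μ +
          ∑' i, P.lipConst i * ∫⁻ x in A ∩ U i, ‖v i x - u x‖ₑ ∂μ := by
        rw [ENNReal.tsum_add]
        exact add_le_add_right (ENNReal.tsum_le_tsum fun i =>
          mul_le_mul_right (P.setLIntegral_localError_le i) _) _

end Integrals

end LipschitzPartition

section TotalVariation

omit [BorelSpace X]

variable {μ : Measure X} {Ω : Set X} {u : X → ℝ}

theorem exists_seq_of_tvOpen_lt {T : ℝ≥0∞} (h : tvOpen μ Ω u < T) :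
    ∃ (v : ℕ → X → ℝ) (g : ℕ → X → ℝ≥0∞), (∀ k, LocLipOn (v k) Ω) ∧
      (∀ k, IsMinimalWUG μ (v k) (g k) Ω) ∧ L1LocConv μ Ω v u ∧
      ∀ k, ∫⁻ x in Ω, g k x ∂μ < T := by
  simp only [tvOpen, iInf_lt_iff] at h
  obtain ⟨v, g, hv, hg, hconv, hlim⟩ := h
  obtain ⟨φ, hφ, hlt⟩ := extraction_of_frequently_atTop
    (frequently_lt_of_liminf_lt (by isBoundedDefault) hlim)
  refine ⟨v ∘ φ, g ∘ φ, fun k => hv _, fun k => hg _, fun x hx => ?_, hlt⟩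
  obtain ⟨r, hr, hball⟩ := hconv x hx
  exact ⟨r, hr, hball.comp hφ.tendsto_atTop⟩

theorem tvOpen_le_liminf {v : ℕ → X → ℝ} {g : ℕ → X → ℝ≥0∞} (hv : ∀ k, LocLipOn (v k) Ω)
    (hg : ∀ k, IsMinimalWUG μ (v k) (g k) Ω) (hconv : L1LocConv μ Ω v u) :
    tvOpen μ Ω u ≤ liminf (fun k => ∫⁻ x in Ω, g k x ∂μ) atTop :=
  iInf_le_of_le v <| iInf_le_of_le g <| iInf_le_of_le hv <| iInf_le_of_le hg <| iInf_le _ hconv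

theorem lintegrableLocOn_of_setLIntegral_lt_top {g : X → ℝ≥0∞} (hg : ∫⁻ x in Ω, g x ∂μ < ∞) :
    LIntegrableLocOn μ g Ω := fun _ _ =>
  ⟨1, one_pos, (lintegral_mono_set inter_subset_left).trans_lt hg⟩

theorem l1LocConv_of_tendsto {v : ℕ → X → ℝ}
    (h : Tendsto (fun k => ∫⁻ x in Ω, ENNReal.ofReal |v k x - u x| ∂μ) atTop (𝓝 0)) :
    L1LocConv μ Ω v u := fun _ _ =>
  ⟨1, one_pos, tendsto_of_tendsto_of_tendsto_of_le_of_le tendsto_const_nhds h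
    (fun _ => zero_le) fun _ => lintegral_mono_set inter_subset_left⟩

theorem exists_lipschitzPartition_of_l1LocConv [SecondCountableTopology X] {v : ℕ → X → ℝ}
    (h : L1LocConv μ Ω v u) : ∃ U : ℕ → Set X,
      (∀ i, Tendsto (fun k => ∫⁻ x in Ω ∩ U i, ‖v k x - u x‖ₑ ∂μ) atTop (𝓝 0)) ∧
      Nonempty (LipschitzPartition Ω U) := by
  refine exists_lipschitzPartition
    (p := fun V => Tendsto (fun k => ∫⁻ x in Ω ∩ V, ‖v k x - u x‖ₑ ∂μ) atTop (𝓝 0))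
    (by simp) fun x hx => ?_
  simpa only [Real.enorm_eq_ofReal_abs] using h x hx

end TotalVariation

section Approximation

variable {μ : Measure X} {Ω : Set X} {u : X → ℝ}

theorem exists_glue_lintegral_le [SecondCountableTopology X] (hΩ : MeasurableSet Ω)
    (hu : AEMeasurable u (μ.restrict Ω)) {v : ℕ → X → ℝ} {g : ℕ → X → ℝ≥0∞} {T ε : ℝ≥0∞}
    (hv : ∀ k, LocLipOn (v k) Ω) (hg : ∀ k, BoundsDerivAlongCurves μ (v k) (g k) Ω)
    (hconv : L1LocConv μ Ω v u) (hgT : ∀ k, ∫⁻ x in Ω, g k x ∂μ ≤ T) (hT : T ≠ ∞) (hε : ε ≠ 0) :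
    ∃ (w : X → ℝ) (G : X → ℝ≥0∞), LocLipOn w Ω ∧ BoundsDerivAlongCurves μ w G Ω ∧
      ∫⁻ x in Ω, ‖w x - u x‖ₑ ∂μ ≤ ε ∧ ∫⁻ x in Ω, G x ∂μ ≤ T + ε + ε := by
  obtain ⟨U, hU, ⟨P⟩⟩ := exists_lipschitzPartition_of_l1LocConv hconv
  obtain ⟨e, he, heε⟩ := ENNReal.exists_pos_sum_of_countable' hε ℕ
  have hvm : ∀ k, AEMeasurable (v k) (μ.restrict Ω) := fun k =>
    (hv k).continuousOn.aemeasurable hΩ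
  obtain ⟨k, hsum, herr⟩ := exists_selection_tsum_le_add
    (I := fun i k => ∫⁻ x in Ω, ‖P.weight i x‖ₑ * g k x ∂μ)
    (D := fun i k => (1 + P.lipConst i) * ∫⁻ x in Ω ∩ U i, ‖v k x - u x‖ₑ ∂μ)
    (fun k => (P.tsum_setLIntegral_enorm_weight_mul hΩ (hg k).1.restrict).trans_le (hgT k)) hT
    (fun i => by simpa using ENNReal.Tendsto.const_mul (hU i) (.inr (by simp)))
    fun i => (he i).ne'
  refine ⟨P.glue fun i => v (k i), P.gluedGradient (fun i => v (k i)) (fun i => g (k i)) u,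
    P.locLipOn_glue fun i => hv _, P.boundsDerivAlongCurves_glue hΩ (fun i => hv _)
    (fun i => hg _) hu, ?_, ?_⟩
  · refine (P.setLIntegral_enorm_glue_sub_le hΩ (fun i => hvm _) hu).trans <|
      (ENNReal.tsum_le_tsum fun i => ?_).trans heε.le
    exact (le_mul_of_one_le_left' le_self_add).trans (herr i)
  · refine (P.setLIntegral_gluedGradient_le hΩ (fun i => hvm _) (fun i => (hg _).1.restrict)
      hu).trans <| add_le_add (hsum.trans (add_le_add_right heε.le _)) <|
      (ENNReal.tsum_le_tsum fun i => ?_).trans heε.le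
    exact (mul_le_mul_left le_add_self _).trans (herr i)

theorem exists_locLipOn_lintegral_le [SecondCountableTopology X] [SFinite μ]
    (hΩ : MeasurableSet Ω) (hu : AEMeasurable u (μ.restrict Ω)) {T ε : ℝ≥0∞}
    (htv : tvOpen μ Ω u < T) (hT : T ≠ ∞) (hε : ε ≠ 0) :
    ∃ (w : X → ℝ) (g : X → ℝ≥0∞), LocLipOn w Ω ∧ IsMinimalWUG μ w g Ω ∧
      ∫⁻ x in Ω, ‖w x - u x‖ₑ ∂μ ≤ ε ∧ ∫⁻ x in Ω, g x ∂μ ≤ T + ε + ε := by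
  obtain ⟨v, g, hv, hg, hconv, hgT⟩ := exists_seq_of_tvOpen_lt htv
  have hgderiv : ∀ k, BoundsDerivAlongCurves μ (v k) (g k) Ω := fun k =>
    (hg k).1.boundsDerivAlongCurves
      (lintegrableLocOn_of_setLIntegral_lt_top ((hgT k).trans_le le_top)) hΩ
  obtain ⟨w, G, hw, hG, hwu, hGT⟩ := exists_glue_lintegral_le hΩ hu hv hgderiv hconv
    (fun k => (hgT k).le) hT hε
  obtain ⟨gw, hgw, hmin⟩ := hw.exists_isMinimalWUG (μ := μ) hΩ
  exact ⟨w, gw, hw, hgw, hwu,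
    (lintegral_mono_ae (ae_restrict_of_ae (hmin G hG))).trans hGT⟩

theorem exists_loclip_strict_approximation_general [SecondCountableTopology X] [SFinite μ]
    (hΩ : MeasurableSet Ω) (hu : AEMeasurable u (μ.restrict Ω)) (hfin : tvOpen μ Ω u < ∞) :
    ∃ (w : ℕ → X → ℝ) (g : ℕ → X → ℝ≥0∞),
      (∀ i, LocLipOn (w i) Ω) ∧
      (∀ i, IsMinimalWUG μ (w i) (g i) Ω) ∧
      Tendsto (fun i => ∫⁻ x in Ω, ENNReal.ofReal |w i x - u x| ∂μ) atTop (𝓝 0) ∧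
      Tendsto (fun i => ∫⁻ x in Ω, g i x ∂μ) atTop (𝓝 (tvOpen μ Ω u)) := by
  obtain ⟨e, -, he, helim⟩ := exists_seq_strictAnti_tendsto' (show (0 : ℝ≥0∞) < ∞ by simp)
  choose w g hw hg hwu hgle using fun n => exists_locLipOn_lintegral_le hΩ hu
    (ENNReal.lt_add_right hfin.ne (he n).1.ne') (ENNReal.add_ne_top.2 ⟨hfin.ne, (he n).2.ne⟩)
    (he n).1.ne'
  simp only [Real.enorm_eq_ofReal_abs] at hwu
  have hL1 : Tendsto (fun i => ∫⁻ x in Ω, ENNReal.ofReal |w i x - u x| ∂μ) atTop (𝓝 0) :=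
    tendsto_of_tendsto_of_tendsto_of_le_of_le tendsto_const_nhds helim (fun _ => zero_le) hwu
  have hupper : Tendsto (fun n => tvOpen μ Ω u + e n + e n + e n) atTop (𝓝 (tvOpen μ Ω u)) := by
    simpa using ((helim.const_add (tvOpen μ Ω u)).add helim).add helim
  refine ⟨w, g, hw, hg, hL1, tendsto_of_le_liminf_of_limsup_le
    (tvOpen_le_liminf hw hg (l1LocConv_of_tendsto hL1)) ?_⟩
  exact (limsup_le_limsup (Eventually.of_forall hgle)).trans_eq hupper.limsup_eq

end Approximation

/-- `L¹`-approximation by locally Lipschitz functions: if `Ω` is open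
and `u ∈ L¹_loc(Ω)` with `‖Du‖(Ω) < ∞`, then there is a sequence `(w_i)` of locally
Lipschitz functions on `Ω` with `w_i - u → 0` in `L¹(Ω)` and
`∫_Ω g_{w_i} dμ → ‖Du‖(Ω)`, where `g_{w_i}` is the minimal `1`-weak upper gradient
of `w_i` in `Ω`. -/
theorem exists_loclip_strict_approximation
    (μ : Measure X) (hcomp : CompleteSpace X)
    (hdoub : ∃ Cd : ℝ, Doubling μ Cd) (hpoin : ∃ CP lam : ℝ, Poincare μ CP lam)
    (Ω : Set X) (hΩ : IsOpen Ω) (u : X → ℝ)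
    (hu : MemL1Loc μ Ω u) (hfin : tvOpen μ Ω u < ∞) :
    ∃ (w : ℕ → X → ℝ) (g : ℕ → X → ℝ≥0∞),
      (∀ i, LocLipOn (w i) Ω) ∧
      (∀ i, IsMinimalWUG μ (w i) (g i) Ω) ∧
      Filter.Tendsto (fun i => ∫⁻ x in Ω, ENNReal.ofReal |w i x - u x| ∂μ)
        Filter.atTop (𝓝 0) ∧
      Filter.Tendsto (fun i => ∫⁻ x in Ω, g i x ∂μ) Filter.atTop (𝓝 (tvOpen μ Ω u)) := by
  obtain ⟨Cd, hd⟩ := hdoub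
  have := hd.sigmaFinite
  have := hd.isOpenPosMeasure
  have := secondCountableTopology_of_isOpenPosMeasure μ
  exact exists_loclip_strict_approximation_general hΩ.measurableSet hu.1 hfin

end PaperBV
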